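/- arXiv:1906.09121 — 2 statements merged into one kernel-verified Lean document; each statement's English description precedes it below -/
import Mathlib

section
/- Let A be a real m×n matrix (m < n) of full rank m, let b be a real m-vector, and let u be the all-ones n-vector. Assume A u ≠ 0. Define α* = (uᵀ Aᵀ (A Aᵀ)⁻¹ b) / (uᵀ Aᵀ (A Aᵀ)⁻¹ A u) and x_V = Aᵀ (A Aᵀ)⁻¹ (b − (A u) α*) + α* u. Then x_V is the unique minimum-variance solution: for every real n-vector z with A z = b and z ≠ x_V, the variance of z is strictly greater than the variance of x_V. -/
open Matrix

noncomputable def mean {n : ℕ} (x : Fin n → ℝ) : ℝ := (∑ i, x i) / n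

noncomputable def variance {n : ℕ} (x : Fin n → ℝ) : ℝ := ∑ i, (x i - mean x) ^ 2

/-!
The variance of `x` is the squared distance from `x` to the line spanned by `u`, so one minimises
`‖z - β u‖²` jointly in `z` and `β`, subject to `A z = b`. For fixed `β` the vector `z - β u` solves
`A y = b - β A u`, whose solution of least norm is `w = Aᵀ (A Aᵀ)⁻¹ (b - β A u)`, and `α*` is the
value of `β` for which `w` is orthogonal to `u`. Every competitor then differs from this `w` by a
vector `e` with `A e` a multiple of `A u`; as `w` lies in the row space of `A`, the inner product of
`w` with `e` is the same multiple of its inner product with `u`, that is, zero, and Pythagoras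
concludes.
-/

section DotProduct

variable {κ R : Type*} [Fintype κ] [CommRing R]

theorem dotProduct_self_sub_smul_one (x : κ → R) (c : R) :
    (x - c • 1) ⬝ᵥ (x - c • 1) = ∑ i, (x i - c) ^ 2 := by
  simp [dotProduct, sq]

theorem dotProduct_self_lt_add_of_dotProduct_eq_zero [LinearOrder R] [IsStrictOrderedRing R]
    {w e : κ → R} (hew : e ⬝ᵥ w = 0) (he : e ≠ 0) : w ⬝ᵥ w < (w + e) ⬝ᵥ (w + e) := by
  have hpos : 0 < e ⬝ᵥ e :=
    (Finset.sum_nonneg fun i _ => mul_self_nonneg (e i)).lt_of_ne'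
      (dotProduct_self_eq_zero.not.2 he)
  calc w ⬝ᵥ w < w ⬝ᵥ w + e ⬝ᵥ e := lt_add_of_pos_right _ hpos
    _ = (w + e) ⬝ᵥ (w + e) := by
      rw [add_dotProduct, dotProduct_add, dotProduct_add, dotProduct_comm w e, hew, add_zero,
        zero_add]

end DotProduct

section Rank

variable {ι κ K : Type*} [Fintype ι] [Fintype κ] [DecidableEq ι]

theorem isUnit_of_rank_eq_card [Field K] {M : Matrix ι ι K} (hM : M.rank = Fintype.card ι) :
    IsUnit M := by
  have hrange : LinearMap.range M.mulVecLin = ⊤ :=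
    Submodule.eq_top_of_finrank_eq (hM.trans (Module.finrank_fintype_fun_eq_card K).symm)
  exact mulVec_surjective_iff_isUnit.1 (LinearMap.range_eq_top.1 hrange)

theorem isUnit_mul_transpose_of_rank_eq_card [Field K] [LinearOrder K]
    [IsStrictOrderedRing K] {A : Matrix ι κ K} (hA : A.rank = Fintype.card ι) :
    IsUnit (A * Aᵀ) :=
  isUnit_of_rank_eq_card ((rank_self_mul_transpose A).trans hA)

end Rank

section MinNormSolution

variable {ι κ K : Type*} [Fintype ι] [Fintype κ] [DecidableEq ι]

section CommRing

variable [CommRing K]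

/-- The solution `Aᵀ (A Aᵀ)⁻¹ b` of `A x = b` that, over the reals, has the least Euclidean norm
when `A` has full row rank. If `A Aᵀ` is not invertible, `(A * Aᵀ)⁻¹ = 0` and the value is `0`. -/
noncomputable def minNormSolution (A : Matrix ι κ K) (b : ι → K) : κ → K :=
  Aᵀ *ᵥ ((A * Aᵀ)⁻¹ *ᵥ b)

theorem mulVec_minNormSolution {A : Matrix ι κ K} (hA : IsUnit (A * Aᵀ)) (b : ι → K) :
    A *ᵥ minNormSolution A b = b := by
  rw [minNormSolution, mulVec_mulVec, mulVec_mulVec,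
    mul_nonsing_inv _ ((isUnit_iff_isUnit_det _).1 hA), one_mulVec]

theorem minNormSolution_sub_smul (A : Matrix ι κ K) (b c : ι → K) (t : K) :
    minNormSolution A (b - t • c) = minNormSolution A b - t • minNormSolution A c := by
  simp only [minNormSolution, mulVec_sub, mulVec_smul]

theorem dotProduct_minNormSolution (A : Matrix ι κ K) (v : κ → K) (b : ι → K) :
    v ⬝ᵥ minNormSolution A b = (A * Aᵀ)⁻¹ *ᵥ b ⬝ᵥ A *ᵥ v :=
  dotProduct_transpose_mulVec A v _

theorem dotProduct_minNormSolution_of_mulVec_eq_smul {A : Matrix ι κ K} {v u : κ → K} {t : K}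
    (h : A *ᵥ v = t • A *ᵥ u) (b : ι → K) :
    v ⬝ᵥ minNormSolution A b = t * (u ⬝ᵥ minNormSolution A b) := by
  rw [dotProduct_minNormSolution, dotProduct_minNormSolution, h, dotProduct_smul, smul_eq_mul]

end CommRing

theorem dotProduct_minNormSolution_mulVec_ne_zero [CommRing K] [LinearOrder K]
    [IsStrictOrderedRing K] {A : Matrix ι κ K} (hA : IsUnit (A * Aᵀ))
    {u : κ → K} (hu : A *ᵥ u ≠ 0) : u ⬝ᵥ minNormSolution A (A *ᵥ u) ≠ 0 := by
  set p := minNormSolution A (A *ᵥ u) with hp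
  have hAp : A *ᵥ p = A *ᵥ u := mulVec_minNormSolution hA _
  have hup : u ⬝ᵥ p = p ⬝ᵥ p := by
    rw [hp, dotProduct_minNormSolution, dotProduct_minNormSolution, ← hp, hAp]
  rw [hup, Ne, dotProduct_self_eq_zero]
  intro hp_zero
  exact hu (by rw [← hAp, hp_zero, mulVec_zero])

theorem dotProduct_minNormSolution_sub_smul_eq_zero [Field K] {A : Matrix ι κ K} {u : κ → K}
    {b c : ι → K} {α : K} (hc : u ⬝ᵥ minNormSolution A c ≠ 0)
    (hα : α = (u ⬝ᵥ minNormSolution A b) / (u ⬝ᵥ minNormSolution A c)) :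
    u ⬝ᵥ minNormSolution A (b - α • c) = 0 := by
  rw [minNormSolution_sub_smul, dotProduct_sub, dotProduct_smul, smul_eq_mul, hα,
    div_mul_cancel₀ _ hc, sub_self]

end MinNormSolution

section Variance

variable {n : ℕ} (x : Fin n → ℝ)

theorem sum_sub_mean : ∑ i, (x i - mean x) = 0 := by
  rcases Nat.eq_zero_or_pos n with rfl | hn
  · exact Fin.sum_univ_zero _
  · rw [Finset.sum_sub_distrib, Finset.sum_const, Finset.card_fin, nsmul_eq_mul, mean,
      mul_div_cancel₀ _ (Nat.cast_ne_zero.2 hn.ne'), sub_self]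

theorem sum_sub_sq_eq_variance_add (c : ℝ) :
    ∑ i, (x i - c) ^ 2 = variance x + n * (mean x - c) ^ 2 := by
  calc ∑ i, (x i - c) ^ 2
      = ∑ i, ((x i - mean x) ^ 2 + 2 * (mean x - c) * (x i - mean x) + (mean x - c) ^ 2) :=
        Finset.sum_congr rfl fun i _ => by ring
    _ = variance x + 2 * (mean x - c) * ∑ i, (x i - mean x) + n * (mean x - c) ^ 2 := by
        rw [Finset.sum_add_distrib, Finset.sum_add_distrib, ← Finset.mul_sum, Finset.sum_const,
          Finset.card_fin, nsmul_eq_mul, variance]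
    _ = variance x + n * (mean x - c) ^ 2 := by rw [sum_sub_mean, mul_zero, add_zero]

theorem variance_le_dotProduct_self_sub_smul_one (c : ℝ) :
    variance x ≤ (x - c • 1) ⬝ᵥ (x - c • 1) := by
  rw [dotProduct_self_sub_smul_one, sum_sub_sq_eq_variance_add]
  exact le_add_of_nonneg_right (by positivity)

end Variance

theorem mv_solution_unique_general {ι κ K : Type*} [Fintype ι] [Fintype κ] [DecidableEq ι]
    [Field K] [LinearOrder K] [IsStrictOrderedRing K]
    {A : Matrix ι κ K} (hrank : A.rank = Fintype.card ι)
    {b : ι → K} {u : κ → K} (hAu : A *ᵥ u ≠ 0) {α : K}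
    (hα : α = (u ⬝ᵥ Aᵀ *ᵥ ((A * Aᵀ)⁻¹ *ᵥ b)) / (u ⬝ᵥ Aᵀ *ᵥ ((A * Aᵀ)⁻¹ *ᵥ (A *ᵥ u))))
    {x : κ → K} (hx : x = Aᵀ *ᵥ ((A * Aᵀ)⁻¹ *ᵥ (b - α • (A *ᵥ u))) + α • u)
    {z : κ → K} (hz : A *ᵥ z = b) (hzx : z ≠ x) (β : K) :
    (x - α • u) ⬝ᵥ (x - α • u) < (z - β • u) ⬝ᵥ (z - β • u) := by
  have hA : IsUnit (A * Aᵀ) := isUnit_mul_transpose_of_rank_eq_card hrank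
  set w := minNormSolution A (b - α • (A *ᵥ u)) with hw
  replace hx : x = w + α • u := hx
  have huw : u ⬝ᵥ w = 0 :=
    dotProduct_minNormSolution_sub_smul_eq_zero
      (dotProduct_minNormSolution_mulVec_ne_zero hA hAu) hα
  set e := z - β • u - w with he
  have hAe : A *ᵥ e = (α - β) • A *ᵥ u := by
    rw [he, mulVec_sub, mulVec_sub, mulVec_smul, hz, hw, mulVec_minNormSolution hA]
    module
  have hew : e ⬝ᵥ w = 0 := by
    rw [hw, dotProduct_minNormSolution_of_mulVec_eq_smul hAe, ← hw, huw, mul_zero]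
  have he_ne : e ≠ 0 := by
    intro he_zero
    rw [he_zero, mulVec_zero, eq_comm, smul_eq_zero_iff_left hAu, sub_eq_zero] at hAe
    apply hzx
    rw [hx, hAe, ← sub_eq_zero, ← he_zero, he]
    abel
  have hxw : x - α • u = w := by rw [hx, add_sub_cancel_right]
  have hzw : z - β • u = w + e := by rw [he, add_sub_cancel]
  rw [hxw, hzw]
  exact dotProduct_self_lt_add_of_dotProduct_eq_zero hew he_ne

theorem mv_solution_unique (m n : ℕ) (hm : 0 < m) (hmn : m < n)
    (A : Matrix (Fin m) (Fin n) ℝ) (hrank : A.rank = m)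
    (b : Fin m → ℝ)
    (u : Fin n → ℝ) (hu : u = fun _ => (1 : ℝ))
    (hAu : A *ᵥ u ≠ 0)
    (αs : ℝ)
    (hαs : αs = (u ⬝ᵥ Aᵀ *ᵥ ((A * Aᵀ)⁻¹ *ᵥ b)) /
                (u ⬝ᵥ Aᵀ *ᵥ ((A * Aᵀ)⁻¹ *ᵥ (A *ᵥ u))))
    (xV : Fin n → ℝ)
    (hxV : xV = Aᵀ *ᵥ ((A * Aᵀ)⁻¹ *ᵥ (b - αs • (A *ᵥ u))) + αs • u) :
    ∀ z : Fin n → ℝ, A *ᵥ z = b → z ≠ xV → variance xV < variance z := by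
  subst hu
  intro z hz hne
  calc variance xV
      ≤ (xV - αs • 1) ⬝ᵥ (xV - αs • 1) := variance_le_dotProduct_self_sub_smul_one xV αs
    _ < (z - mean z • 1) ⬝ᵥ (z - mean z • 1) :=
        mv_solution_unique_general (by rw [hrank, Fintype.card_fin]) hAu hαs hxV hz hne (mean z)
    _ = variance z := dotProduct_self_sub_smul_one z (mean z)
end

section
/- Let A be a real m×n matrix (m < n) of full rank m, let b be a real m-vector, and let u be the all-ones n-vector. Assume A u ≠ 0. Define α* = (uᵀ Aᵀ (A Aᵀ)⁻¹ b) / (uᵀ Aᵀ (A Aᵀ)⁻¹ A u), the base solution x_B = Aᵀ (A Aᵀ)⁻¹ (b − (A u) α*), and x_V = x_B + α* u. Then the mean of x_V equals α*, the zero-mean (variable) part of x_V equals x_B, and the variance of x_V equals ‖x_B‖². -/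
open Matrix

/-!
The Gram matrix `A * Aᵀ` of the independent rows of `A` is positive definite, hence so is its
inverse, and the denominator of `αs` is the value at `A *ᵥ u ≠ 0` of the quadratic form of that
inverse. As the denominator does not vanish, `αs` is the coefficient for which `xB` is orthogonal
to `u`, i.e. has mean zero; adding `αs • u` to `xB` then shifts the mean to `αs` and leaves the
variance unchanged.
-/

section Matrix

variable {m n K : Type*} [Fintype m] [Fintype n] [Field K]

theorem linearIndependent_row_iff_rank_eq_card {A : Matrix m n K} :
    LinearIndependent K A.row ↔ A.rank = Fintype.card m := by
  rw [linearIndependent_iff_card_eq_finrank_span, rank_eq_finrank_span_row, eq_comm, Set.finrank]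

theorem posDef_inv_mul_conjTranspose_self [DecidableEq m] [PartialOrder K] [StarRing K]
    [StarOrderedRing K] {A : Matrix m n K} (hA : LinearIndependent K A.row) :
    (A * Aᴴ)⁻¹.PosDef :=
  (PosDef.mul_conjTranspose_self A (vecMul_injective_iff.mpr hA)).inv

theorem dotProduct_transpose_mulVec_inv_pos [DecidableEq m] [PartialOrder K] [StarRing K]
    [StarOrderedRing K] [TrivialStar K] {A : Matrix m n K} (hA : LinearIndependent K A.row)
    {v : n → K} (hv : A *ᵥ v ≠ 0) :
    0 < v ⬝ᵥ Aᵀ *ᵥ ((A * Aᵀ)⁻¹ *ᵥ (A *ᵥ v)) := by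
  have hpos := (posDef_inv_mul_conjTranspose_self hA).dotProduct_mulVec_pos hv
  rwa [star_trivial, conjTranspose_eq_transpose_of_trivial, dotProduct_comm,
    ← dotProduct_transpose_mulVec] at hpos

theorem dotProduct_mulVec_sub_div_smul_eq_zero (B : Matrix n m K) (v : n → K) (b : m → K)
    {c : m → K} (hc : v ⬝ᵥ B *ᵥ c ≠ 0) :
    v ⬝ᵥ B *ᵥ (b - ((v ⬝ᵥ B *ᵥ b) / (v ⬝ᵥ B *ᵥ c)) • c) = 0 := by
  rw [mulVec_sub, mulVec_smul, dotProduct_sub, dotProduct_smul, smul_eq_mul,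
    div_mul_cancel₀ _ hc, sub_self]

end Matrix

section Mean

variable {n : ℕ} (x : Fin n → ℝ) (c : ℝ)

theorem mean_eq_one_dotProduct_div : mean x = 1 ⬝ᵥ x / n := by
  rw [mean, one_dotProduct]

theorem mean_add_smul_one [NeZero n] : mean (x + c • 1) = mean x + c := by
  have hn : (n : ℝ) ≠ 0 := NeZero.ne _
  simp [mean_eq_one_dotProduct_div, add_div, hn]

theorem variance_add_smul_one : variance (x + c • 1) = variance x := by
  obtain rfl | hn := eq_or_ne n 0
  · simp [variance]
  · have : NeZero n := ⟨hn⟩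
    simp [variance, mean_add_smul_one]

variable {x}

theorem variance_eq_sum_sq_of_mean_eq_zero (hx : mean x = 0) : variance x = ∑ i, x i ^ 2 := by
  simp only [variance, hx, sub_zero]

end Mean

theorem mv_solution_decomposition_general {ι : Type*} [Fintype ι] [DecidableEq ι] {n : ℕ}
    (A : Matrix ι (Fin n) ℝ) (hrank : A.rank = Fintype.card ι)
    (b : ι → ℝ)
    (u : Fin n → ℝ) (hu : u = fun _ => (1 : ℝ))
    (hAu : A *ᵥ u ≠ 0)
    (αs : ℝ)
    (hαs : αs = (u ⬝ᵥ Aᵀ *ᵥ ((A * Aᵀ)⁻¹ *ᵥ b)) /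
                (u ⬝ᵥ Aᵀ *ᵥ ((A * Aᵀ)⁻¹ *ᵥ (A *ᵥ u))))
    (xB : Fin n → ℝ)
    (hxB : xB = Aᵀ *ᵥ ((A * Aᵀ)⁻¹ *ᵥ (b - αs • (A *ᵥ u))))
    (xV : Fin n → ℝ)
    (hxV : xV = xB + αs • u) :
    mean xV = αs ∧ xV - mean xV • u = xB ∧ variance xV = ∑ i, xB i ^ 2 := by
  obtain rfl : u = 1 := hu
  have : NeZero n := ⟨by rintro rfl; exact hAu (mulVec_empty A 1)⟩
  have hdenom := dotProduct_transpose_mulVec_inv_pos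
    (linearIndependent_row_iff_rank_eq_card.mpr hrank) hAu
  have horth : 1 ⬝ᵥ xB = 0 := by
    rw [mulVec_mulVec] at hxB hdenom
    rw [mulVec_mulVec, mulVec_mulVec _ Aᵀ] at hαs
    rw [hxB, hαs]
    exact dotProduct_mulVec_sub_div_smul_eq_zero _ _ _ hdenom.ne'
  have hmeanB : mean xB = 0 := by rw [mean_eq_one_dotProduct_div, horth, zero_div]
  have hmeanV : mean xV = αs := by rw [hxV, mean_add_smul_one, hmeanB, zero_add]
  refine ⟨hmeanV, ?_, ?_⟩
  · rw [hmeanV, hxV, add_sub_cancel_right]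
  · rw [hxV, variance_add_smul_one, variance_eq_sum_sq_of_mean_eq_zero hmeanB]

theorem mv_solution_decomposition (m n : ℕ) (hm : 0 < m) (hmn : m < n)
    (A : Matrix (Fin m) (Fin n) ℝ) (hrank : A.rank = m)
    (b : Fin m → ℝ)
    (u : Fin n → ℝ) (hu : u = fun _ => (1 : ℝ))
    (hAu : A *ᵥ u ≠ 0)
    (αs : ℝ)
    (hαs : αs = (u ⬝ᵥ Aᵀ *ᵥ ((A * Aᵀ)⁻¹ *ᵥ b)) /
                (u ⬝ᵥ Aᵀ *ᵥ ((A * Aᵀ)⁻¹ *ᵥ (A *ᵥ u))))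
    (xB : Fin n → ℝ)
    (hxB : xB = Aᵀ *ᵥ ((A * Aᵀ)⁻¹ *ᵥ (b - αs • (A *ᵥ u))))
    (xV : Fin n → ℝ)
    (hxV : xV = xB + αs • u) :
    mean xV = αs ∧ xV - mean xV • u = xB ∧ variance xV = ∑ i, xB i ^ 2 :=
  mv_solution_decomposition_general A (by simpa using hrank) b u hu hAu αs hαs xB hxB xV hxV
end
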